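/- arXiv:1111.7119 — 2 statements merged into one kernel-verified Lean document; each statement's English description precedes it below -/
import Mathlib

section
/- Let n be a natural number, X and Y nonempty sets, and A : X → ℝⁿ, B : Y → ℝⁿ arbitrary functions. Then A(x) · B(y) = 1 for all x ∈ X and y ∈ Y (Euclidean dot product in ℝⁿ) if and only if there exist a natural number s with 0 ≤ s ≤ n − 1, an n × s real matrix C of rank s, a vector d ∈ ℝⁿ, and functions u¹, …, uˢ : X → ℝ such that the constant function 1 together with u¹, …, uˢ form a linearly independent family in the vector space of real-valued functions on X, and: A(x) = C·u(x) + d for all x ∈ X (where u(x) = (u¹(x), …, uˢ(x))ᵀ), B(y)ᵀ C = 0 for all y ∈ Y, and B(y) · d = 1 for all y ∈ Y. -/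
open Matrix

/-!
Fix a base point `x₀`. The directions `A x - A x₀` span a subspace `W`, on which every functional
`B y` vanishes because it is constant on the values of `A`; as `B y` is nonzero, `W` is proper and
has dimension at most `n - 1`. The columns of `C` are a basis of `W`, the functions `uʲ` are the
coordinates of `A x - A x₀` in this basis, and `d = A x₀`. A linear relation among the `uʲ` is a
functional on `W` vanishing on all `A x - A x₀`, hence zero; and `1` is independent of the `uʲ`
since they all vanish at `x₀`.
-/

section LinearIndependence

variable {R M N X ι : Type*}

theorem linearIndependent_eval_of_span_range_eq_top [CommSemiring R] [AddCommMonoid M]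
    [AddCommMonoid N] [Module R M] [Module R N] {φ : ι → M →ₗ[R] N} (hφ : LinearIndependent R φ)
    {v : X → M} (hv : Submodule.span R (Set.range v) = ⊤) :
    LinearIndependent R (fun i x => φ i (v x)) := by
  let evalAt : (M →ₗ[R] N) →ₗ[R] (X → N) := LinearMap.funLeft R N v ∘ₗ LinearMap.ltoFun R M N R
  have hinj : Function.Injective evalAt := fun _ _ h => LinearMap.ext_on_range hv (congrFun h)
  exact hφ.map_injOn evalAt hinj.injOn

theorem linearIndependent_cons_one_of_apply_eq_zero [Ring R] {s : ℕ} {u : Fin s → X → R}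
    (hu : LinearIndependent R u) {x₀ : X} (hx₀ : ∀ i, u i x₀ = 0) :
    LinearIndependent R (Fin.cons (1 : X → R) u : Fin (s + 1) → X → R) := by
  have hspan : Submodule.span R (Set.range u) ≤ LinearMap.ker (LinearMap.proj x₀) :=
    Submodule.span_le.mpr (Set.range_subset_iff.mpr hx₀)
  refine hu.finCons' 1 u fun c f hf hcf => ?_
  have hfx₀ : f x₀ = 0 := hspan hf
  simpa [hfx₀] using congrFun hcf x₀

end LinearIndependence

section VectorSpan

variable {R V P X : Type*} [AddCommGroup V] [AddTorsor V P]

theorem span_range_vsub_right_eq_top [Ring R] [Module R V] (f : X → P) (x₀ : X) :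
    Submodule.span R (Set.range fun x => (⟨f x -ᵥ f x₀, vsub_mem_vectorSpan R
      (Set.mem_range_self x) (Set.mem_range_self x₀)⟩ : vectorSpan R (Set.range f))) = ⊤ := by
  apply Submodule.map_injective_of_injective (vectorSpan R (Set.range f)).injective_subtype
  rw [Submodule.map_span, Submodule.map_subtype_top, ← Set.range_comp]
  exact (vectorSpan_range_eq_span_range_vsub_right R f x₀).symm

theorem exists_affine_coordinates_linearIndependent [CommRing R] [Module R V] {s : ℕ}
    {f : X → P} (b : Module.Basis (Fin s) R (vectorSpan R (Set.range f))) (x₀ : X) :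
    ∃ u : X → Fin s → R,
      LinearIndependent R (Fin.cons (1 : X → R) (fun i x => u x i) : Fin (s + 1) → X → R) ∧
      ∀ x, f x = (∑ i, u x i • (b i : V)) +ᵥ f x₀ := by
  let v (x : X) : vectorSpan R (Set.range f) :=
    ⟨f x -ᵥ f x₀, vsub_mem_vectorSpan R (Set.mem_range_self x) (Set.mem_range_self x₀)⟩
  have hv₀ : v x₀ = 0 := Subtype.ext (vsub_self _)
  have hli : LinearIndependent R (fun i x => b.coord i (v x)) :=
    linearIndependent_eval_of_span_range_eq_top b.linearIndependent_coord
      (span_range_vsub_right_eq_top f x₀)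
  refine ⟨fun x => b.equivFun (v x),
    linearIndependent_cons_one_of_apply_eq_zero hli (x₀ := x₀) (by simp [hv₀]), fun x => ?_⟩
  have hsum : ∑ i, b.equivFun (v x) i • (b i : V) = f x -ᵥ f x₀ := by
    simpa only [Submodule.coe_sum, Submodule.coe_smul] using
      congrArg Subtype.val (b.sum_equivFun (v x))
  rw [hsum, vsub_vadd]

theorem vectorSpan_range_le_ker {N : Type*} [Ring R] [Module R V] [AddCommGroup N] [Module R N]
    {φ : V →ₗ[R] N} {f : X → V} {c : N} (h : ∀ x, φ (f x) = c) :
    vectorSpan R (Set.range f) ≤ LinearMap.ker φ := by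
  rw [vectorSpan_def, Submodule.span_le]
  rintro _ ⟨_, ⟨x, rfl⟩, _, ⟨y, rfl⟩, rfl⟩
  simp [h]

theorem finrank_vectorSpan_range_lt {N : Type*} [DivisionRing R] [Module R V]
    [FiniteDimensional R V] [AddCommGroup N] [Module R N] [Nonempty X] {φ : V →ₗ[R] N}
    {f : X → V} {c : N} (hc : c ≠ 0) (h : ∀ x, φ (f x) = c) :
    Module.finrank R (vectorSpan R (Set.range f)) < Module.finrank R V := by
  obtain ⟨x₀⟩ := ‹Nonempty X›
  have hx₀ : f x₀ ∉ vectorSpan R (Set.range f) := fun hmem =>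
    hc ((h x₀).symm.trans (vectorSpan_range_le_ker h hmem))
  exact Submodule.finrank_lt (ne_of_mem_of_not_mem' Submodule.mem_top hx₀).symm

end VectorSpan

section Matrix

theorem rank_eq_card_of_linearIndependent_col {R m n : Type*} [CommRing R] [Nontrivial R]
    [Fintype n] {C : Matrix m n R} (hC : LinearIndependent R C.col) : C.rank = Fintype.card n :=
  C.rank_eq_finrank_span_cols.trans (finrank_span_eq_card hC)

theorem exists_mulVec_add_rank_eq_finrank_vectorSpan {K ι X : Type*} [Field K] [Finite ι]
    (A : X → ι → K) (x₀ : X) :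
    ∃ (C : Matrix ι (Fin (Module.finrank K (vectorSpan K (Set.range A)))) K)
      (u : X → Fin (Module.finrank K (vectorSpan K (Set.range A))) → K),
      C.rank = Module.finrank K (vectorSpan K (Set.range A)) ∧
      LinearIndependent K (Fin.cons (1 : X → K) (fun i x => u x i) : Fin (_ + 1) → X → K) ∧
      (∀ x, A x = C *ᵥ u x + A x₀) ∧
      ∀ j, C.col j ∈ vectorSpan K (Set.range A) := by
  let b := Module.finBasis K (vectorSpan K (Set.range A))
  have hb : LinearIndependent K fun j => (b j : ι → K) :=
    b.linearIndependent.map' (Submodule.subtype _) (Submodule.ker_subtype _)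
  obtain ⟨u, hu, hA⟩ := exists_affine_coordinates_linearIndependent b x₀
  refine ⟨(of fun j => (b j : ι → K))ᵀ, u,
    (rank_eq_card_of_linearIndependent_col hb).trans (Fintype.card_fin _), hu, fun x => ?_,
    fun j => (b j).2⟩
  rw [mulVec_transpose, vecMul_eq_sum]
  exact hA x

end Matrix

theorem separation_of_variables_lemma_general {K ι X Y : Type*} [Field K] [Fintype ι]
    [Nonempty X] [Nonempty Y] (A : X → ι → K) (B : Y → ι → K) :
    (∀ (x : X) (y : Y), A x ⬝ᵥ B y = 1) ↔
      ∃ s : ℕ, s ≤ Fintype.card ι - 1 ∧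
        ∃ (C : Matrix ι (Fin s) K) (d : ι → K) (u : X → Fin s → K),
          C.rank = s ∧
          LinearIndependent K
            (Fin.cons (1 : X → K) (fun i x => u x i) : Fin (s + 1) → X → K) ∧
          (∀ x : X, A x = C.mulVec (u x) + d) ∧
          (∀ y : Y, Matrix.vecMul (B y) C = 0) ∧
          (∀ y : Y, B y ⬝ᵥ d = 1) := by
  constructor
  · intro h
    have hB (y : Y) (x : X) : dotProductBilin K K (B y) (A x) = 1 :=
      (dotProduct_comm _ _).trans (h x y)
    obtain ⟨x₀⟩ := ‹Nonempty X›
    obtain ⟨y₀⟩ := ‹Nonempty Y›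
    obtain ⟨C, u, hC, hu, hA, hcol⟩ := exists_mulVec_add_rank_eq_finrank_vectorSpan A x₀
    have hs : Module.finrank K (vectorSpan K (Set.range A)) < Fintype.card ι := by
      simpa only [Module.finrank_fintype_fun_eq_card] using
        finrank_vectorSpan_range_lt one_ne_zero (hB y₀)
    have hBC (y : Y) : B y ᵥ* C = 0 :=
      funext fun j => vectorSpan_range_le_ker (hB y) (hcol j)
    exact ⟨_, Nat.le_sub_one_of_lt hs, C, A x₀, u, hC, hu, hA, hBC, fun y => hB y x₀⟩
  · rintro ⟨s, -, C, d, u, -, -, hA, hC, hd⟩ x y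
    rw [dotProduct_comm, hA, dotProduct_add, dotProduct_mulVec, hC, zero_dotProduct, hd, zero_add]

/-- Lemma 1 (separation of variables): for nonempty `X`, `Y` and arbitrary maps
`A : X → ℝⁿ`, `B : Y → ℝⁿ`, one has `A x ⬝ᵥ B y = 1` for all `x, y` iff there are
`s ≤ n - 1`, an `n × s` matrix `C` of rank `s`, a vector `d` and functions
`u¹, …, uˢ : X → ℝ` such that `1, u¹, …, uˢ` are linearly independent,
`A x = C ⬝ u x + d`, `(B y)ᵀ C = 0` and `B y ⬝ᵥ d = 1`. -/
theorem separation_of_variables_lemma (n : ℕ) (X Y : Type*) [Nonempty X] [Nonempty Y]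
    (A : X → Fin n → ℝ) (B : Y → Fin n → ℝ) :
    (∀ (x : X) (y : Y), A x ⬝ᵥ B y = 1) ↔
      ∃ s : ℕ, s ≤ n - 1 ∧
        ∃ (C : Matrix (Fin n) (Fin s) ℝ) (d : Fin n → ℝ) (u : X → Fin s → ℝ),
          C.rank = s ∧
          LinearIndependent ℝ
            (Fin.cons (1 : X → ℝ) (fun i x => u x i) : Fin (s + 1) → X → ℝ) ∧
          (∀ x : X, A x = C.mulVec (u x) + d) ∧
          (∀ y : Y, Matrix.vecMul (B y) C = 0) ∧
          (∀ y : Y, B y ⬝ᵥ d = 1) := by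
  simpa only [Fintype.card_fin] using separation_of_variables_lemma_general A B
end

section
/- Let v, B : ℝ³ → ℝ³ be differentiable vector fields and P : ℝ³ → ℝ a differentiable function satisfying everywhere: (v·∇)v − (B·∇)B + ∇P = 0, (B·∇)v = (v·∇)B, div v = 0, div B = 0. Let f : ℝ → ℝ be differentiable and let φ : ℝ³ → ℝ be differentiable with (v·∇)φ = 0 and (B·∇)φ = 0 everywhere. Define ṽ = sinh(f∘φ) B + cosh(f∘φ) v and B̃ = cosh(f∘φ) B + sinh(f∘φ) v. Then (ṽ, B̃, P) also satisfy everywhere: (ṽ·∇)ṽ − (B̃·∇)B̃ + ∇P = 0, (B̃·∇)ṽ = (ṽ·∇)B̃, div ṽ = 0, div B̃ = 0. -/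
open Matrix

/-- The convective derivative `(u·∇)w : x ↦ (Dw(x))(u(x))` of a vector field. -/
noncomputable def convDeriv (u w : (Fin 3 → ℝ) → (Fin 3 → ℝ)) (x : Fin 3 → ℝ) : Fin 3 → ℝ :=
  fderiv ℝ w x (u x)

/-- The divergence `div w(x)`, the trace of `Dw(x)`, computed as the sum of the
diagonal entries of the Jacobian matrix. -/
noncomputable def vecDiv (w : (Fin 3 → ℝ) → (Fin 3 → ℝ)) (x : Fin 3 → ℝ) : ℝ :=
  ∑ i : Fin 3, fderiv ℝ w x (Pi.single i 1) i

/-- The gradient `∇P` of a scalar function, the vector of partial derivatives. -/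
noncomputable def grad (P : (Fin 3 → ℝ) → ℝ) (x : Fin 3 → ℝ) : Fin 3 → ℝ :=
  fun i => fderiv ℝ P x (Pi.single i 1)

/-!
In the Elsässer variables `z± = v ± B` the system is diagonal:
`(z₋·∇)z₊ = (z₊·∇)z₋ = -∇P` and `div z± = 0`. The hyperbolic rotation with angle `θ = f ∘ φ`
becomes the rescaling `z± ↦ exp (±θ) z±`. The two factors are constant along both fields, so they
pass through the convective derivatives, where they cancel, and do not affect the divergences.
-/

section ConstantAlong

variable {𝕜 E F : Type*} [NontriviallyNormedField 𝕜] [NormedAddCommGroup E] [NormedSpace 𝕜 E]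
  [NormedAddCommGroup F] [NormedSpace 𝕜 F] {a : E → 𝕜} {x u : E}

theorem fderiv_fun_inv_apply_eq_zero (ha : DifferentiableAt 𝕜 a x) (hax : a x ≠ 0)
    (hau : fderiv 𝕜 a x u = 0) : fderiv 𝕜 (fun y => (a y)⁻¹) x u = 0 := by
  have h : HasFDerivAt (fun y => (a y)⁻¹) (-(a x ^ 2)⁻¹ • fderiv 𝕜 a x) x :=
    (hasDerivAt_inv hax).comp_hasFDerivAt x ha.hasFDerivAt
  simp [h.fderiv, hau]

theorem fderiv_fun_smul_apply_inv_smul {w : E → F} (ha : DifferentiableAt 𝕜 a x) (hax : a x ≠ 0)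
    (hw : DifferentiableAt 𝕜 w x) (hau : fderiv 𝕜 a x u = 0) :
    fderiv 𝕜 (fun y => a y • w y) x ((a x)⁻¹ • u) = fderiv 𝕜 w x u := by
  simp [fderiv_fun_smul ha hw, hau, smul_smul, hax]

end ConstantAlong

section Divergence

variable {𝕜 E : Type*} [NontriviallyNormedField 𝕜] [NormedAddCommGroup E] [NormedSpace 𝕜 E]
  {v w : E → E} {x : E}

variable (𝕜) in
/-- The divergence of a vector field on a normed space, as the trace of its derivative. It takes
the junk value `0` where the field is not differentiable and on infinite-dimensional spaces. -/
noncomputable def divergence (w : E → E) (x : E) : 𝕜 :=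
  LinearMap.trace 𝕜 E (fderiv 𝕜 w x)

theorem divergence_add (hv : DifferentiableAt 𝕜 v x) (hw : DifferentiableAt 𝕜 w x) :
    divergence 𝕜 (v + w) x = divergence 𝕜 v x + divergence 𝕜 w x := by
  simp [divergence, fderiv_add hv hw]

theorem divergence_sub (hv : DifferentiableAt 𝕜 v x) (hw : DifferentiableAt 𝕜 w x) :
    divergence 𝕜 (v - w) x = divergence 𝕜 v x - divergence 𝕜 w x := by
  simp [divergence, fderiv_sub hv hw]

theorem divergence_fun_smul [FiniteDimensional 𝕜 E] {a : E → 𝕜} (ha : DifferentiableAt 𝕜 a x)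
    (hw : DifferentiableAt 𝕜 w x) :
    divergence 𝕜 (fun y => a y • w y) x = a x * divergence 𝕜 w x + fderiv 𝕜 a x (w x) := by
  simp [divergence, fderiv_fun_smul ha hw]

theorem vecDiv_eq_divergence (w : (Fin 3 → ℝ) → (Fin 3 → ℝ)) (x : Fin 3 → ℝ) :
    vecDiv w x = divergence ℝ w x := by
  simp [vecDiv, divergence, LinearMap.trace_eq_matrix_trace ℝ (Pi.basisFun ℝ (Fin 3)),
    Matrix.trace]

end Divergence

section MHD

variable {E : Type*} [NormedAddCommGroup E] [NormedSpace ℝ E] {v B z₁ z₂ F : E → E}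

/-- The stationary incompressible ideal MHD system for the velocity `v` and the magnetic field `B`.
The field `F` stands for the pressure gradient `∇P`; it need not be a gradient here. -/
structure IsStationaryIdealMHD (v B F : E → E) : Prop where
  differentiable_velocity : Differentiable ℝ v
  differentiable_magnetic : Differentiable ℝ B
  momentum_eq : ∀ x, fderiv ℝ v x (v x) - fderiv ℝ B x (B x) + F x = 0
  induction_eq : ∀ x, fderiv ℝ v x (B x) = fderiv ℝ B x (v x)
  divergence_velocity : ∀ x, divergence ℝ v x = 0
  divergence_magnetic : ∀ x, divergence ℝ B x = 0

/-- The Elsässer form of the stationary incompressible ideal MHD system, for the fields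
`z₁ = v + B` and `z₂ = v - B`; the field `F` stands for the pressure gradient. -/
structure IsStationaryElsasser (z₁ z₂ F : E → E) : Prop where
  differentiable_left : Differentiable ℝ z₁
  differentiable_right : Differentiable ℝ z₂
  transport_left : ∀ x, fderiv ℝ z₁ x (z₂ x) + F x = 0
  transport_right : ∀ x, fderiv ℝ z₂ x (z₁ x) + F x = 0
  divergence_left : ∀ x, divergence ℝ z₁ x = 0
  divergence_right : ∀ x, divergence ℝ z₂ x = 0

theorem IsStationaryIdealMHD.isStationaryElsasser (h : IsStationaryIdealMHD v B F) :
    IsStationaryElsasser (v + B) (v - B) F := by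
  obtain ⟨hv, hB, hmom, hind, div_v, div_B⟩ := h
  refine ⟨hv.add hB, hv.sub hB, fun x => ?_, fun x => ?_, fun x => ?_, fun x => ?_⟩
  · simp only [fderiv_add (hv x) (hB x), _root_.add_apply, Pi.sub_apply, map_sub]
    linear_combination (norm := module) hmom x - hind x
  · simp only [fderiv_sub (hv x) (hB x), _root_.sub_apply, Pi.add_apply, map_add]
    linear_combination (norm := module) hmom x + hind x
  · rw [divergence_add (hv x) (hB x), div_v, div_B, add_zero]
  · rw [divergence_sub (hv x) (hB x), div_v, div_B, sub_zero]

theorem IsStationaryElsasser.isStationaryIdealMHD (h : IsStationaryElsasser (v + B) (v - B) F) :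
    IsStationaryIdealMHD v B F := by
  obtain ⟨hadd, hsub, transport_add, transport_sub, div_add, div_sub⟩ := h
  have hv : Differentiable ℝ v := by
    convert (hadd.add hsub).const_smul (2⁻¹ : ℝ) using 1
    module
  have hB : Differentiable ℝ B := by
    convert hadd.sub hv using 1
    abel
  simp only [fderiv_add (hv _) (hB _), _root_.add_apply, Pi.sub_apply, map_sub] at transport_add
  simp only [fderiv_sub (hv _) (hB _), _root_.sub_apply, Pi.add_apply, map_add] at transport_sub
  simp only [divergence_add (hv _) (hB _)] at div_add
  simp only [divergence_sub (hv _) (hB _)] at div_sub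
  refine ⟨hv, hB, fun x => ?_, fun x => ?_, fun x => ?_, fun x => ?_⟩
  · linear_combination (norm := module) (2⁻¹ : ℝ) • transport_add x + (2⁻¹ : ℝ) • transport_sub x
  · linear_combination (norm := module) (2⁻¹ : ℝ) • transport_sub x - (2⁻¹ : ℝ) • transport_add x
  · linear_combination (div_add x + div_sub x) / 2
  · linear_combination (div_add x - div_sub x) / 2

variable [FiniteDimensional ℝ E]

theorem IsStationaryElsasser.smul_inv_smul (h : IsStationaryElsasser z₁ z₂ F) {a : E → ℝ}
    (ha : Differentiable ℝ a) (ha₀ : ∀ x, a x ≠ 0) (ha₁ : ∀ x, fderiv ℝ a x (z₁ x) = 0)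
    (ha₂ : ∀ x, fderiv ℝ a x (z₂ x) = 0) :
    IsStationaryElsasser (fun x => a x • z₁ x) (fun x => (a x)⁻¹ • z₂ x) F := by
  have hb : Differentiable ℝ fun x => (a x)⁻¹ := ha.fun_inv ha₀
  have hb₁ x := fderiv_fun_inv_apply_eq_zero (ha x) (ha₀ x) (ha₁ x)
  have hb₂ x := fderiv_fun_inv_apply_eq_zero (ha x) (ha₀ x) (ha₂ x)
  obtain ⟨hz₁, hz₂, transport₁, transport₂, div₁, div₂⟩ := h
  refine ⟨ha.smul hz₁, hb.smul hz₂, fun x => ?_, fun x => ?_, fun x => ?_, fun x => ?_⟩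
  · rw [fderiv_fun_smul_apply_inv_smul (ha x) (ha₀ x) (hz₁ x) (ha₂ x), transport₁]
  · have hcancel := fderiv_fun_smul_apply_inv_smul (hb x) (inv_ne_zero (ha₀ x)) (hz₂ x) (hb₁ x)
    rw [inv_inv] at hcancel
    rw [hcancel, transport₂]
  · rw [divergence_fun_smul (ha x) (hz₁ x), div₁, ha₁, mul_zero, add_zero]
  · rw [divergence_fun_smul (hb x) (hz₂ x), div₂, hb₂, mul_zero, add_zero]

theorem mhd_hyperbolic_rotation_symmetry_general (h : IsStationaryIdealMHD v B F) {θ : E → ℝ}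
    (hθ : Differentiable ℝ θ) (hθv : ∀ x, fderiv ℝ θ x (v x) = 0)
    (hθB : ∀ x, fderiv ℝ θ x (B x) = 0) :
    IsStationaryIdealMHD (fun x => Real.sinh (θ x) • B x + Real.cosh (θ x) • v x)
      (fun x => Real.cosh (θ x) • B x + Real.sinh (θ x) • v x) F := by
  apply IsStationaryElsasser.isStationaryIdealMHD
  convert h.isStationaryElsasser.smul_inv_smul (a := fun x => Real.exp (θ x)) hθ.exp
    (fun x => Real.exp_ne_zero _) (fun x => ?_) (fun x => ?_) using 1
  · ext1 x
    simp only [Pi.add_apply, ← Real.cosh_add_sinh]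
    module
  · ext1 x
    simp only [Pi.sub_apply, ← Real.exp_neg, ← Real.cosh_sub_sinh]
    module
  · simp [fderiv_exp (hθ x), hθv, hθB]
  · simp [fderiv_exp (hθ x), hθv, hθB]

end MHD

/-- The hyperbolic-rotation symmetry (Transform) of the stationary incompressible ideal MHD
system: if `(v, B, P)` solves the system and `φ` is constant along streamlines and magnetic
lines, then `ṽ = sinh(f∘φ) B + cosh(f∘φ) v`, `B̃ = cosh(f∘φ) B + sinh(f∘φ) v` together with
the same `P` again solve the system. -/
theorem mhd_hyperbolic_rotation_symmetry (v B : (Fin 3 → ℝ) → (Fin 3 → ℝ))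
    (P : (Fin 3 → ℝ) → ℝ) (hv : Differentiable ℝ v) (hB : Differentiable ℝ B)
    (hP : Differentiable ℝ P)
    (heq1 : ∀ x, convDeriv v v x - convDeriv B B x + grad P x = 0)
    (heq2 : ∀ x, convDeriv B v x = convDeriv v B x)
    (heq3 : ∀ x, vecDiv v x = 0) (heq4 : ∀ x, vecDiv B x = 0)
    (f : ℝ → ℝ) (hf : Differentiable ℝ f)
    (φ : (Fin 3 → ℝ) → ℝ) (hφ : Differentiable ℝ φ)
    (hφv : ∀ x, fderiv ℝ φ x (v x) = 0) (hφB : ∀ x, fderiv ℝ φ x (B x) = 0) :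
    (∀ x, convDeriv
        (fun y => Real.sinh (f (φ y)) • B y + Real.cosh (f (φ y)) • v y)
        (fun y => Real.sinh (f (φ y)) • B y + Real.cosh (f (φ y)) • v y) x -
      convDeriv
        (fun y => Real.cosh (f (φ y)) • B y + Real.sinh (f (φ y)) • v y)
        (fun y => Real.cosh (f (φ y)) • B y + Real.sinh (f (φ y)) • v y) x +
      grad P x = 0) ∧
    (∀ x, convDeriv
        (fun y => Real.cosh (f (φ y)) • B y + Real.sinh (f (φ y)) • v y)
        (fun y => Real.sinh (f (φ y)) • B y + Real.cosh (f (φ y)) • v y) x =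
      convDeriv
        (fun y => Real.sinh (f (φ y)) • B y + Real.cosh (f (φ y)) • v y)
        (fun y => Real.cosh (f (φ y)) • B y + Real.sinh (f (φ y)) • v y) x) ∧
    (∀ x, vecDiv (fun y => Real.sinh (f (φ y)) • B y + Real.cosh (f (φ y)) • v y) x = 0) ∧
    (∀ x, vecDiv (fun y => Real.cosh (f (φ y)) • B y + Real.sinh (f (φ y)) • v y) x = 0) := by
  have hθ (x u : Fin 3 → ℝ) (hu : fderiv ℝ φ x u = 0) : fderiv ℝ (f ∘ φ) x u = 0 := by
    rw [fderiv_comp x (hf _) (hφ x), ContinuousLinearMap.comp_apply, hu, map_zero]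
  simp only [vecDiv_eq_divergence] at heq3 heq4 ⊢
  have h := mhd_hyperbolic_rotation_symmetry_general ⟨hv, hB, heq1, heq2, heq3, heq4⟩
    (hf.comp hφ) (fun x => hθ x _ (hφv x)) (fun x => hθ x _ (hφB x))
  exact ⟨h.momentum_eq, h.induction_eq, h.divergence_velocity, h.divergence_magnetic⟩
end
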